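/- Let P₁ and P₂ be properties (sets of complete theories of Σ). There exists a Σ-sentence φ such that φ totally satisfies P₁ and ¬φ totally satisfies P₂ if and only if the E-closures of P₁ and P₂ are disjoint: Cl_E(P₁) ∩ Cl_E(P₂) = ∅. -/

import Mathlib

open FirstOrder Language

/-- A sentence φ *partially satisfies* a property `P`: `φ ⊳_pt P` iff `φ ∈ T` for some `T ∈ P`. -/
def PartSat {L : FirstOrder.Language} (φ : L.Sentence) (P : Set L.Theory) : Prop :=
  ∃ T ∈ P, φ ∈ T

/-- A sentence φ *totally satisfies* a property `P`: `φ ⊳_tt P` iff `φ ∈ T` for every `T ∈ P`. -/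
def TotSat {L : FirstOrder.Language} (φ : L.Sentence) (P : Set L.Theory) : Prop :=
  ∀ T ∈ P, φ ∈ T

/-- The E-closure of a property `P`: the set of complete theories `T` such that every sentence
of `T` belongs to some theory of `P`. -/
def ClE {L : FirstOrder.Language} (P : Set L.Theory) : Set L.Theory :=
  {T | T.IsMaximal ∧ ∀ φ ∈ T, ∃ T' ∈ P, φ ∈ T'}

/-!
Let `Th(P) = ⋂₀ P`. The E-closure of `P` consists of the complete theories extending `Th(P)`, so
the E-closures of `P₁` and `P₂` are disjoint iff `Th(P₁) ∪ Th(P₂)` is unsatisfiable. By compactness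
this means that `Th(P₁) ⊨ φ` and `Th(P₂) ⊨ ¬φ` for some sentence `φ`. As `Th(P)` is an intersection
of deductively closed theories, these are the sentences separating `P₁` from `P₂`.
-/

section Compactness

variable {L : FirstOrder.Language}

/-- The conjunction of a finite set of sentences, well-defined up to logical equivalence only,
since the order of the conjuncts is chosen arbitrarily. -/
noncomputable def finsetConj (s : Finset L.Sentence) : L.Sentence :=
  Formula.iInf fun φ : s => (φ : L.Sentence)

theorem realize_finsetConj {M : Type*} [L.Structure M] {s : Finset L.Sentence} :
    M ⊨ finsetConj s ↔ M ⊨ (s : L.Theory) := by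
  simp only [finsetConj, Sentence.Realize, Formula.realize_iInf, Subtype.forall,
    Theory.model_iff, Finset.mem_coe]

theorem exists_finset_not_isSatisfiable_union {S T : L.Theory} (h : ¬(S ∪ T).IsSatisfiable) :
    ∃ s : Finset L.Sentence, (s : L.Theory) ⊆ S ∧ ¬(s ∪ T : L.Theory).IsSatisfiable := by
  classical
  rw [Theory.isSatisfiable_iff_isFinitelySatisfiable, Theory.IsFinitelySatisfiable] at h
  push Not at h
  obtain ⟨u, hu, hu_unsat⟩ := h
  obtain ⟨s, t, rfl, hs, ht⟩ := Finset.subset_union_elim hu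
  refine ⟨s, hs, fun h_sat => hu_unsat (h_sat.mono ?_)⟩
  rw [Finset.coe_union]
  exact Set.union_subset_union_right _ (ht.trans Set.sdiff_subset)

theorem models_not_finsetConj_of_not_isSatisfiable_union {s : Finset L.Sentence} {T : L.Theory}
    (h : ¬(s ∪ T : L.Theory).IsSatisfiable) : T ⊨ᵇ (finsetConj s).not := by
  rw [Theory.models_sentence_iff]
  intro M
  rw [Sentence.realize_not, realize_finsetConj]
  intro hM
  have : M ⊨ (s : L.Theory) ∪ T := hM.union M.is_model
  exact h (Theory.Model.isSatisfiable M)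

theorem not_isSatisfiable_union_iff {S T : L.Theory} :
    ¬(S ∪ T).IsSatisfiable ↔ ∃ φ : L.Sentence, S ⊨ᵇ φ ∧ T ⊨ᵇ φ.not := by
  constructor
  · intro h
    obtain ⟨s, hs, hs_unsat⟩ := exists_finset_not_isSatisfiable_union h
    refine ⟨finsetConj s, ?_, models_not_finsetConj_of_not_isSatisfiable_union hs_unsat⟩
    rw [Theory.models_sentence_iff]
    exact fun M => realize_finsetConj.2 (M.is_model.mono hs)
  · rintro ⟨φ, hφ, hφ_not⟩ ⟨M⟩
    have hS : M ⊨ S := M.is_model.mono Set.subset_union_left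
    have hT : M ⊨ T := M.is_model.mono Set.subset_union_right
    exact (Sentence.realize_not M).1 (hφ_not.realize_sentence M) (hφ.realize_sentence M)

theorem isSatisfiable_iff_exists_isMaximal_superset {S : L.Theory} :
    S.IsSatisfiable ↔ ∃ T : L.Theory, T.IsMaximal ∧ S ⊆ T := by
  constructor
  · rintro ⟨M⟩
    exact ⟨L.completeTheory M, completeTheory.isMaximal L M, Theory.completeTheory.subset⟩
  · rintro ⟨T, hT, hST⟩
    exact hT.1.mono hST

end Compactness

section EClosure

variable {L : FirstOrder.Language} {P P₁ P₂ : Set L.Theory}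

theorem totSat_iff_sInter_models (hP : ∀ T ∈ P, T.IsMaximal) {φ : L.Sentence} :
    TotSat φ P ↔ (⋂₀ P : L.Theory) ⊨ᵇ φ := by
  constructor
  · exact fun h => Theory.models_sentence_of_mem (Set.mem_sInter.2 h)
  · intro h T hT
    refine (hP T hT).mem_of_models (Theory.models_of_models_theory (fun ψ hψ => ?_) h)
    exact Theory.models_sentence_of_mem (Set.mem_sInter.1 hψ T hT)

theorem mem_clE_iff (hP : ∀ T ∈ P, T.IsMaximal) {T : L.Theory} :
    T ∈ ClE P ↔ T.IsMaximal ∧ ⋂₀ P ⊆ T := by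
  refine and_congr_right fun hT => ⟨fun h φ hφ => ?_, fun h φ hφ => ?_⟩
  · refine (hT.mem_or_not_mem φ).resolve_right fun hφ_not => ?_
    obtain ⟨T', hT', hφ_not'⟩ := h _ hφ_not
    exact Theory.CompleteType.false_of_mem_of_not_mem (hP T' hT').1 (hφ T' hT') hφ_not'
  · by_contra! hφ_notMem
    have hφ_not : φ.not ∈ ⋂₀ P := fun T' hT' =>
      ((hP T' hT').mem_or_not_mem φ).resolve_left (hφ_notMem T' hT')
    exact Theory.CompleteType.false_of_mem_of_not_mem hT.1 hφ (h hφ_not)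

theorem clE_inter_clE_eq_empty_iff (h₁ : ∀ T ∈ P₁, T.IsMaximal) (h₂ : ∀ T ∈ P₂, T.IsMaximal) :
    ClE P₁ ∩ ClE P₂ = ∅ ↔ ¬(⋂₀ P₁ ∪ ⋂₀ P₂ : L.Theory).IsSatisfiable := by
  rw [← Set.not_nonempty_iff_eq_empty, isSatisfiable_iff_exists_isMaximal_superset]
  simp only [Set.Nonempty, Set.mem_inter_iff, mem_clE_iff h₁, mem_clE_iff h₂,
    ← and_and_left, Set.union_subset_iff]

end EClosure

/-- There is a sentence φ with φ ⊳_tt P₁ and ¬φ ⊳_tt P₂ iff the E-closures of P₁ and P₂ are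
disjoint. -/
theorem totSat_separation {L : FirstOrder.Language} (P₁ P₂ : Set L.Theory)
    (h₁ : ∀ T ∈ P₁, T.IsMaximal) (h₂ : ∀ T ∈ P₂, T.IsMaximal) :
    (∃ φ : L.Sentence, TotSat φ P₁ ∧ TotSat φ.not P₂) ↔ ClE P₁ ∩ ClE P₂ = ∅ := by
  simp only [totSat_iff_sInter_models h₁, totSat_iff_sInter_models h₂]
  rw [clE_inter_clE_eq_empty_iff h₁ h₂, not_isSatisfiable_union_iff]
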